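/- Let n ≥ 3 be an integer, let η > 0, and let m, α, β satisfy 0 < m < (n−2)/n and 2β/(1−m) > max(α, 0). Let v be a radial solution of (E) on [0,∞). Then there exist constants C ≥ c > 0 such that c ≤ r^{α/β}·v(r) ≤ C for all r ≥ 1. -/

import Mathlib

open Real Set Filter

/-- `v` is a radial solution of the elliptic equation
`((n-1)/m)·((v^m)'' + ((n-1)/r)(v^m)') + α v + β r v' = 0` on `[0, ∞)`
with `v > 0`, `v(0) = η`, `v'(0) = 0`. -/
def IsRadialSol (n : ℕ) (m α β η : ℝ) (v : ℝ → ℝ) : Prop :=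
  (∀ r ∈ Set.Ici (0:ℝ), 0 < v r) ∧
  ContinuousOn v (Set.Ici (0:ℝ)) ∧
  ContDiffOn ℝ 2 v (Set.Ioi (0:ℝ)) ∧
  HasDerivWithinAt v 0 (Set.Ici (0:ℝ)) 0 ∧
  v 0 = η ∧
  ∀ r ∈ Set.Ioi (0:ℝ),
    (((n : ℝ) - 1) / m) * (deriv (deriv (fun s => v s ^ m)) r
      + (((n : ℝ) - 1) / r) * deriv (fun s => v s ^ m) r)
    + α * v r + β * r * deriv v r = 0

/-!
The slope `y = r v' / v` of a radial solution in log-log coordinates satisfies the Riccati equation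
`r y' = -y (m y + n - 2) - P (y + α / β)` with `P = β / (n - 1) * r ^ 2 * v ^ (1 - m) > 0`.

At a level `c` beyond the segment between `0` and `-α / β` (and above `-(n - 2) / m`) the right-hand
side pushes `y` back towards the segment. Since `v` is continuous and positive at the origin, `y`
cannot start beyond such a level, so it stays in the segment for all `r > 0`. The slope of `P` is
`2 + (1 - m) y`, which `(1 - m) α < 2 β` therefore bounds below by some `ε > 0`; thus `P` grows at
least like `r ^ ε`, and the strong damping forces `|y + α / β| ≤ C r ^ (-δ)`. This is the slope of
`r ^ (α / β) * v`, and it is integrable against `dr / r` at infinity, so `log (r ^ (α / β) * v)` is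
bounded.
-/

/-- The slope `y = r u'(r) / u(r)` of `u` in log-log coordinates. A power `r ^ b` has slope `b`, so
the asymptotic power law of `u` is read off from the behaviour of its slope. -/
noncomputable def logSlope (u : ℝ → ℝ) (r : ℝ) : ℝ := r * logDeriv u r

section LogSlope

variable {u : ℝ → ℝ} {r : ℝ}

lemma deriv_eq_mul_logSlope_div (hr : r ≠ 0) (hu : u r ≠ 0) :
    deriv u r = u r * logSlope u r / r := by
  simp only [logSlope, logDeriv_apply]
  field_simp

lemma logSlope_inv (hu : u r ≠ 0) (hd : DifferentiableAt ℝ u r) :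
    logSlope (fun s => (u s)⁻¹) r = -logSlope u r := by
  simp only [logSlope, logDeriv_apply, deriv_fun_inv'' hd hu]
  field_simp

lemma logSlope_rpow (hu : 0 < u r) (hd : DifferentiableAt ℝ u r) (p : ℝ) :
    logSlope (fun s => u s ^ p) r = p * logSlope u r := by
  simp only [logSlope, logDeriv_apply, deriv_rpow_const hd (Or.inl hu.ne'), rpow_sub_one hu.ne']
  field_simp

lemma logSlope_rpow_mul (hr : 0 < r) (hu : u r ≠ 0) (hd : DifferentiableAt ℝ u r) (b : ℝ) :
    logSlope (fun s => s ^ b * u s) r = b + logSlope u r := by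
  have hpow : logSlope (fun s => s ^ b) r = b := by
    rw [logSlope_rpow (u := fun s => s) hr differentiableAt_id, logSlope, logDeriv_id']
    field_simp
  rw [logSlope, logDeriv_mul r (rpow_pos_of_pos hr b).ne' hu
    (differentiableAt_rpow_const_of_ne b hr.ne') hd, mul_add]
  exact congrArg (· + logSlope u r) hpow

lemma monotoneOn_of_logSlope_nonneg {s : Set ℝ} (hs : Convex ℝ s) (hs0 : ∀ r ∈ s, 0 < r)
    (hu : ∀ r ∈ s, 0 < u r) (hd : ∀ r ∈ s, DifferentiableAt ℝ u r)
    (hnonneg : ∀ r ∈ s, 0 ≤ logSlope u r) : MonotoneOn u s := by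
  refine monotoneOn_of_deriv_nonneg hs (fun r hr => (hd r hr).continuousAt.continuousWithinAt)
    (fun r hr => (hd r (interior_subset hr)).differentiableWithinAt) fun r hr => ?_
  replace hr := interior_subset hr
  rw [deriv_eq_mul_logSlope_div (hs0 r hr).ne' (hu r hr).ne']
  exact div_nonneg (mul_nonneg (hu r hr).le (hnonneg r hr)) (hs0 r hr).le

lemma mul_rpow_le_mul_rpow_of_le_logSlope {b x y : ℝ} (hx : 0 < x) (hxy : x ≤ y)
    (hu : ∀ r ∈ Icc x y, 0 < u r) (hd : ∀ r ∈ Icc x y, DifferentiableAt ℝ u r)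
    (hb : ∀ r ∈ Icc x y, b ≤ logSlope u r) : u x * y ^ b ≤ u y * x ^ b := by
  have hpos : ∀ r ∈ Icc x y, 0 < r := fun r hr => hx.trans_le hr.1
  have hmono : MonotoneOn (fun r => r ^ (-b) * u r) (Icc x y) :=
    monotoneOn_of_logSlope_nonneg (convex_Icc x y) hpos
      (fun r hr => mul_pos (rpow_pos_of_pos (hpos r hr) _) (hu r hr))
      (fun r hr => (differentiableAt_rpow_const_of_ne _ (hpos r hr).ne').mul (hd r hr))
      fun r hr => by
        rw [logSlope_rpow_mul (hpos r hr) (hu r hr).ne' (hd r hr)]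
        linarith [hb r hr]
  have hle := hmono (left_mem_Icc.2 hxy) (right_mem_Icc.2 hxy) hxy
  have hy : 0 < y := hx.trans_le hxy
  simp only [rpow_neg hx.le, rpow_neg hy.le, inv_mul_eq_div] at hle
  rwa [div_le_div_iff₀ (rpow_pos_of_pos hx b) (rpow_pos_of_pos hy b)] at hle

lemma exists_logSlope_lt {b y : ℝ} (hb : 0 < b) (hy : 0 < y)
    (hcont : ContinuousWithinAt u (Ioi 0) 0) (hu : ∀ r, 0 ≤ r → 0 < u r)
    (hd : ∀ r, 0 < r → DifferentiableAt ℝ u r) : ∃ x ∈ Ioc 0 y, logSlope u x < b := by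
  by_contra! hge
  have hle : ∀ᶠ x in nhdsWithin 0 (Ioi 0), u x * y ^ b ≤ u y * x ^ b := by
    filter_upwards [Ioc_mem_nhdsGT hy] with x hx
    exact mul_rpow_le_mul_rpow_of_le_logSlope hx.1 hx.2 (fun r hr => hu r (hx.1.le.trans hr.1))
      (fun r hr => hd r (hx.1.trans_le hr.1)) fun r hr => hge r ⟨hx.1.trans_le hr.1, hr.2⟩
  have hpow : Tendsto (fun x : ℝ => u y * x ^ b) (nhdsWithin 0 (Ioi 0)) (nhds (u y * 0 ^ b)) :=
    ((continuousAt_rpow_const 0 b (Or.inr hb.le)).tendsto.mono_left nhdsWithin_le_nhds).const_mul _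
  have hlim := le_of_tendsto_of_tendsto (hcont.tendsto.mul_const (y ^ b)) hpow hle
  rw [zero_rpow hb.ne', mul_zero] at hlim
  exact hlim.not_gt (mul_pos (hu 0 le_rfl) (rpow_pos_of_pos hy b))

-- Near the origin `u` is almost constant, so its slope starts below `c`, and it cannot cross `c`.
lemma logSlope_le_of_deriv_neg {c : ℝ} (hc : 0 < c)
    (hcont : ContinuousWithinAt u (Ioi 0) 0) (hu : ∀ r, 0 ≤ r → 0 < u r)
    (hd : ∀ r, 0 < r → DifferentiableAt ℝ u r)
    (hd' : ∀ r, 0 < r → DifferentiableAt ℝ (logSlope u) r)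
    (hneg : ∀ r, 0 < r → logSlope u r = c → deriv (logSlope u) r < 0) (hr : 0 < r) :
    logSlope u r ≤ c := by
  obtain ⟨x, hx, hxc⟩ := exists_logSlope_lt hc hr hcont hu hd
  have hpos : ∀ t, x ≤ t → 0 < t := fun t ht => hx.1.trans_le ht
  exact image_le_of_deriv_right_lt_deriv_boundary
    (fun t ht => (hd' t (hpos t ht.1)).continuousAt.continuousWithinAt)
    (fun t ht => (hd' t (hpos t ht.1)).hasDerivAt.hasDerivWithinAt) hxc.le
    (fun t => hasDerivAt_const t c) (fun t ht => hneg t (hpos t ht.1)) (right_mem_Icc.2 hx.2)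

lemma le_logSlope_of_deriv_pos {c : ℝ} (hc : c < 0)
    (hcont : ContinuousWithinAt u (Ioi 0) 0) (hu : ∀ r, 0 ≤ r → 0 < u r)
    (hd : ∀ r, 0 < r → DifferentiableAt ℝ u r)
    (hd' : ∀ r, 0 < r → DifferentiableAt ℝ (logSlope u) r)
    (hpos : ∀ r, 0 < r → logSlope u r = c → 0 < deriv (logSlope u) r) (hr : 0 < r) :
    c ≤ logSlope u r := by
  have hinv : ∀ s, 0 < s → logSlope (fun t => (u t)⁻¹) s = -logSlope u s := fun s hs =>
    logSlope_inv (hu s hs.le).ne' (hd s hs)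
  have hev : ∀ s, 0 < s → logSlope (fun t => (u t)⁻¹) =ᶠ[nhds s] fun t => -logSlope u t :=
    fun s hs => eventually_of_mem (Ioi_mem_nhds hs) hinv
  have hle := logSlope_le_of_deriv_neg (u := fun t => (u t)⁻¹) (neg_pos.2 hc)
    (hcont.inv₀ (hu 0 le_rfl).ne')
    (fun s hs => inv_pos.2 (hu s hs)) (fun s hs => (hd s hs).inv (hu s hs.le).ne')
    (fun s hs => (hd' s hs).neg.congr_of_eventuallyEq (hev s hs))
    (fun s hs h => by
      rw [hinv s hs, neg_inj] at h
      rw [(hev s hs).deriv_eq, deriv.fun_neg]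
      exact neg_neg_of_pos (hpos s hs h)) hr
  rw [hinv r hr] at hle
  exact neg_le_neg_iff.1 hle

lemma abs_log_sub_log_le_of_abs_logSlope_le {C δ : ℝ} (hδ : 0 < δ) (hu : ∀ r, 1 ≤ r → 0 < u r)
    (hd : ∀ r, 1 ≤ r → DifferentiableAt ℝ u r)
    (hC : ∀ r, 1 ≤ r → |logSlope u r| ≤ C * r ^ (-δ)) (hr : 1 ≤ r) :
    |log (u r) - log (u 1)| ≤ C / δ := by
  have hlog : ∀ s, 1 ≤ s →
      HasDerivAt (fun t => log (u t) - log (u 1)) (logSlope u s / s) s := fun s hs => by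
    refine (((hd s hs).hasDerivAt.log (hu s hs).ne').sub_const _).congr_deriv ?_
    rw [logSlope, logDeriv_apply, mul_div_cancel_left₀ _ (one_pos.trans_le hs).ne']
  have hbound : ∀ s : ℝ, 1 ≤ s →
      HasDerivAt (fun t => C / δ * (1 - t ^ (-δ))) (C * s ^ (-δ) / s) s := fun s hs => by
    have hs0 : s ≠ 0 := (one_pos.trans_le hs).ne'
    refine (((hasDerivAt_rpow_const (p := -δ) (Or.inl hs0)).const_sub 1).const_mul
      (C / δ)).congr_deriv ?_
    rw [rpow_sub_one hs0]
    field_simp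
  have hle := image_norm_le_of_norm_deriv_right_le_deriv_boundary'
    (fun s hs => (hlog s hs.1).continuousAt.continuousWithinAt)
    (fun s hs => (hlog s hs.1).hasDerivWithinAt) (by simp)
    (fun s hs => (hbound s hs.1).continuousAt.continuousWithinAt)
    (fun s hs => (hbound s hs.1).hasDerivWithinAt)
    (fun s hs => by
      have hs0 : 0 < s := one_pos.trans_le hs.1
      rw [norm_div, norm_eq_abs, norm_of_nonneg hs0.le]
      exact div_le_div_of_nonneg_right (hC s hs.1) hs0.le) (right_mem_Icc.2 hr)
  have hC0 : 0 ≤ C := by simpa using (abs_nonneg _).trans (hC 1 le_rfl)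
  refine hle.trans (mul_le_of_le_one_right (div_nonneg hC0 hδ.le) ?_)
  linarith [rpow_nonneg (zero_le_one.trans hr) (-δ)]

lemma exists_bounds_of_abs_logSlope_le {C δ : ℝ} (hδ : 0 < δ) (hu : ∀ r, 1 ≤ r → 0 < u r)
    (hd : ∀ r, 1 ≤ r → DifferentiableAt ℝ u r)
    (hC : ∀ r, 1 ≤ r → |logSlope u r| ≤ C * r ^ (-δ)) :
    ∃ A B : ℝ, 0 < A ∧ A ≤ B ∧ ∀ r, 1 ≤ r → A ≤ u r ∧ u r ≤ B := by
  have key : ∀ r, 1 ≤ r → exp (log (u 1) - C / δ) ≤ u r ∧ u r ≤ exp (log (u 1) + C / δ) :=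
    fun r hr => by
      have hlog := abs_le.1 (abs_log_sub_log_le_of_abs_logSlope_le hδ hu hd hC hr)
      rw [← le_log_iff_exp_le (hu r hr), ← log_le_iff_le_exp (hu r hr)]
      constructor <;> linarith
  exact ⟨_, _, exp_pos _, (key 1 le_rfl).1.trans (key 1 le_rfl).2, key⟩

end LogSlope

section Relaxation

variable {g P : ℝ → ℝ} {c ε B : ℝ}

lemma le_mul_rpow_neg_of_mul_deriv_add_mul_le {δ C : ℝ} (hc : 0 ≤ c) (hδ : 0 ≤ δ) (hδε : δ ≤ ε)
    (hC : 0 ≤ C) (hBC : B + δ * C < c * C) (hd : ∀ r, 1 ≤ r → DifferentiableAt ℝ g r)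
    (hP : ∀ r, 1 ≤ r → c * r ^ ε ≤ P r) (h : ∀ r, 1 ≤ r → r * deriv g r + P r * g r ≤ B)
    (h1 : g 1 ≤ C) {r : ℝ} (hr : 1 ≤ r) : g r ≤ C * r ^ (-δ) := by
  have hbarrier : ∀ s : ℝ, 1 ≤ s →
      HasDerivAt (fun t => C * t ^ (-δ)) (-(δ * C * s ^ (-δ)) / s) s := fun s hs => by
    have hs0 : s ≠ 0 := (one_pos.trans_le hs).ne'
    refine ((hasDerivAt_rpow_const (p := -δ) (Or.inl hs0)).const_mul C).congr_deriv ?_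
    rw [rpow_sub_one hs0]
    ring
  refine image_le_of_deriv_right_lt_deriv_boundary'
    (fun s hs => (hd s hs.1).continuousAt.continuousWithinAt)
    (fun s hs => (hd s hs.1).hasDerivAt.hasDerivWithinAt) (by simpa using h1)
    (fun s hs => (hbarrier s hs.1).continuousAt.continuousWithinAt)
    (fun s hs => (hbarrier s hs.1).hasDerivWithinAt) (fun s hs heq => ?_) (right_mem_Icc.2 hr)
  have hs0 : 0 < s := one_pos.trans_le hs.1
  have hdamp : c * C ≤ P s * g s := calc
    c * C ≤ c * C * s ^ (ε - δ) :=
      le_mul_of_one_le_right (mul_nonneg hc hC) (one_le_rpow hs.1 (sub_nonneg.2 hδε))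
    _ = c * s ^ ε * (C * s ^ (-δ)) := by rw [sub_eq_add_neg, rpow_add hs0]; ring
    _ ≤ P s * g s := by
      rw [heq]
      exact mul_le_mul_of_nonneg_right (hP s hs.1) (mul_nonneg hC (rpow_nonneg hs0.le _))
  have hdecay : δ * C * s ^ (-δ) ≤ δ * C := mul_le_of_le_one_right (mul_nonneg hδ hC)
    (rpow_le_one_of_one_le_of_nonpos hs.1 (neg_nonpos.2 hδ))
  rw [lt_div_iff₀ hs0]
  linarith [h s hs.1]

lemma exists_abs_le_mul_rpow_neg_of_abs_mul_deriv_add_mul_le (hc : 0 < c) (hε : 0 < ε)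
    (hd : ∀ r, 1 ≤ r → DifferentiableAt ℝ g r) (hP : ∀ r, 1 ≤ r → c * r ^ ε ≤ P r)
    (h : ∀ r, 1 ≤ r → |r * deriv g r + P r * g r| ≤ B) :
    ∃ C δ : ℝ, 0 < δ ∧ ∀ r, 1 ≤ r → |g r| ≤ C * r ^ (-δ) := by
  set δ := min ε (c / 2)
  set C := max |g 1| (2 * B / c + 1)
  have hδ : 0 < δ := lt_min hε (half_pos hc)
  have hC : 0 ≤ C := (abs_nonneg _).trans (le_max_left _ _)
  have hBC : B + δ * C < c * C := by
    have hδC : δ * C ≤ c / 2 * C := mul_le_mul_of_nonneg_right (min_le_right _ _) hC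
    have hlt : 2 * B / c < C := (lt_add_one _).trans_le (le_max_right _ _)
    rw [div_lt_iff₀ hc] at hlt
    linarith
  refine ⟨C, δ, hδ, fun r hr => abs_le'.2 ⟨?_, ?_⟩⟩
  · exact le_mul_rpow_neg_of_mul_deriv_add_mul_le hc.le hδ.le (min_le_left _ _) hC hBC hd hP
      (fun s hs => (abs_le.1 (h s hs)).2) ((le_abs_self _).trans (le_max_left _ _)) hr
  · refine le_mul_rpow_neg_of_mul_deriv_add_mul_le (g := fun s => -g s) hc.le hδ.le
      (min_le_left _ _) hC hBC (fun s hs => (hd s hs).neg) hP (fun s hs => ?_)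
      ((neg_le_abs _).trans (le_max_left _ _)) hr
    rw [deriv.fun_neg]
    linarith [(abs_le.1 (h s hs)).1]

end Relaxation

/-- The coefficient of `y + α / β` in the Riccati equation satisfied by the slope `y` of a radial
solution `v`; its growth drives `y` to the equilibrium `-α / β`. -/
noncomputable def dampingRate (n : ℕ) (m β : ℝ) (v : ℝ → ℝ) (r : ℝ) : ℝ :=
  β / (n - 1) * (r ^ (2 : ℝ) * v r ^ (1 - m))

lemma logSlope_dampingRate {n : ℕ} (hn : n ≠ 1) {m β r : ℝ} (hβ : β ≠ 0) {v : ℝ → ℝ} (hr : 0 < r)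
    (hv : 0 < v r) (hd : DifferentiableAt ℝ v r) :
    logSlope (dampingRate n m β v) r = 2 + (1 - m) * logSlope v r := by
  have hn' : (n : ℝ) - 1 ≠ 0 := sub_ne_zero.2 (Nat.cast_ne_one.2 hn)
  rw [← logSlope_rpow hv hd, ← logSlope_rpow_mul (u := fun s => v s ^ (1 - m)) hr
    (rpow_pos_of_pos hv _).ne' (hd.rpow_const (Or.inl hv.ne')), logSlope, logSlope]
  exact congrArg (r * ·) (logDeriv_const_mul r _ (div_ne_zero hβ hn'))

namespace IsRadialSol

variable {n : ℕ} {m α β η : ℝ} {v : ℝ → ℝ} {r : ℝ}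

lemma pos (hv : IsRadialSol n m α β η v) (hr : 0 ≤ r) : 0 < v r := hv.1 r hr

lemma continuousWithinAt_zero (hv : IsRadialSol n m α β η v) : ContinuousWithinAt v (Ioi 0) 0 :=
  (hv.2.1 0 self_mem_Ici).mono Ioi_subset_Ici_self

lemma differentiableAt (hv : IsRadialSol n m α β η v) (hr : 0 < r) : DifferentiableAt ℝ v r :=
  (hv.2.2.1.differentiableOn two_ne_zero).differentiableAt (Ioi_mem_nhds hr)

lemma differentiableAt_deriv (hv : IsRadialSol n m α β η v) (hr : 0 < r) :
    DifferentiableAt ℝ (deriv v) r :=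
  ((hv.2.2.1.deriv_of_isOpen (m := 1) isOpen_Ioi (by norm_num)).differentiableOn
    one_ne_zero).differentiableAt (Ioi_mem_nhds hr)

lemma differentiableAt_logSlope (hv : IsRadialSol n m α β η v) (hr : 0 < r) :
    DifferentiableAt ℝ (logSlope v) r :=
  differentiableAt_id.mul
    ((hv.differentiableAt_deriv hr).div (hv.differentiableAt hr) (hv.pos hr.le).ne')

lemma deriv_rpow_eq (hv : IsRadialSol n m α β η v) (hr : 0 < r) :
    deriv (fun s => v s ^ m) r = v r ^ m * (m * logSlope v r) / r := by
  have hvr := hv.pos hr.le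
  rw [← logSlope_rpow hvr (hv.differentiableAt hr)]
  exact deriv_eq_mul_logSlope_div hr.ne' (rpow_pos_of_pos hvr m).ne'

lemma deriv_deriv_rpow_eq (hv : IsRadialSol n m α β η v) (hr : 0 < r) :
    deriv (deriv fun s => v s ^ m) r = m * v r ^ m / r ^ 2 *
      (r * deriv (logSlope v) r + m * logSlope v r ^ 2 - logSlope v r) := by
  have hev : deriv (fun s => v s ^ m) =ᶠ[nhds r] fun s => v s ^ m * (m * logSlope v s) / s :=
    eventually_of_mem (Ioi_mem_nhds hr) fun s hs => hv.deriv_rpow_eq hs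
  have hw := ((hv.differentiableAt hr).rpow_const (p := m)
    (Or.inl (hv.pos hr.le).ne')).hasDerivAt
  have hy := (hv.differentiableAt_logSlope hr).hasDerivAt
  rw [hev.deriv_eq, ((hw.fun_mul (hy.const_mul m)).fun_div (hasDerivAt_id' r) hr.ne').deriv,
    hv.deriv_rpow_eq hr]
  field_simp
  ring

lemma riccati (hv : IsRadialSol n m α β η v) (hn : n ≠ 1) (hm : m ≠ 0) (hβ : β ≠ 0) (hr : 0 < r) :
    r * deriv (logSlope v) r + dampingRate n m β v r * (logSlope v r + α / β) =
      -(logSlope v r * (m * logSlope v r + (n - 2))) := by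
  have hn' : (n : ℝ) - 1 ≠ 0 := sub_ne_zero.2 (Nat.cast_ne_one.2 hn)
  have hvr := hv.pos hr.le
  have hode := hv.2.2.2.2.2 r hr
  rw [hv.deriv_deriv_rpow_eq hr, hv.deriv_rpow_eq hr,
    deriv_eq_mul_logSlope_div (u := v) hr.ne' hvr.ne'] at hode
  have hw : v r ^ m ≠ 0 := (rpow_pos_of_pos hvr m).ne'
  rw [dampingRate, rpow_two, rpow_sub hvr, rpow_one]
  field_simp at hode ⊢
  linear_combination hode

lemma dampingRate_pos (hv : IsRadialSol n m α β η v) (hn : 1 < n) (hβ : 0 < β) (hr : 0 < r) :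
    0 < dampingRate n m β v r := by
  have hn' : (1 : ℝ) < n := by exact_mod_cast hn
  exact mul_pos (div_pos hβ (sub_pos.2 hn'))
    (mul_pos (rpow_pos_of_pos hr _) (rpow_pos_of_pos (hv.pos hr.le) _))

lemma logSlope_le (hv : IsRadialSol n m α β η v) (hn : 2 ≤ n) (hm : 0 < m) (hβ : 0 < β)
    (hr : 0 < r) : logSlope v r ≤ max 0 (-(α / β)) := by
  have hn' : (2 : ℝ) ≤ n := by exact_mod_cast hn
  refine le_of_forall_gt_imp_ge_of_dense fun c hc => ?_
  obtain ⟨hc0, hcα⟩ := max_lt_iff.1 hc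
  refine logSlope_le_of_deriv_neg hc0 hv.continuousWithinAt_zero
    (fun s hs => hv.pos hs) (fun s hs => hv.differentiableAt hs)
    (fun s hs => hv.differentiableAt_logSlope hs) (fun s hs hsc => ?_) hr
  have hric := hv.riccati (by lia) hm.ne' hβ.ne' hs
  rw [hsc] at hric
  have hdamp : 0 < dampingRate n m β v s * (c + α / β) :=
    mul_pos (hv.dampingRate_pos (by lia) hβ hs) (by linarith)
  have hreact : 0 < c * (m * c + (n - 2)) :=
    mul_pos hc0 (add_pos_of_pos_of_nonneg (mul_pos hm hc0) (sub_nonneg.2 hn'))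
  exact neg_of_mul_neg_right (by linarith) hs.le

lemma le_logSlope (hv : IsRadialSol n m α β η v) (hn : 3 ≤ n) (hm : 0 < m) (hβ : 0 < β)
    (hmα : m * α < (n - 2) * β) (hr : 0 < r) : min 0 (-(α / β)) ≤ logSlope v r := by
  have hn' : (3 : ℝ) ≤ n := by exact_mod_cast hn
  have hcrit : -((n - 2) / m) < min 0 (-(α / β)) := by
    refine lt_min (neg_lt_zero.2 (div_pos (by linarith) hm)) (neg_lt_neg ?_)
    rw [div_lt_div_iff₀ hβ hm]
    linarith
  by_contra! hlt
  obtain ⟨c, hc, hc'⟩ := exists_between (max_lt hlt hcrit)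
  obtain ⟨hyc, hnc⟩ := max_lt_iff.1 hc
  obtain ⟨hc0, hcα⟩ := lt_min_iff.1 hc'
  refine hyc.not_ge (le_logSlope_of_deriv_pos hc0 hv.continuousWithinAt_zero
    (fun s hs => hv.pos hs) (fun s hs => hv.differentiableAt hs)
    (fun s hs => hv.differentiableAt_logSlope hs) (fun s hs hsc => ?_) hr)
  have hric := hv.riccati (by lia) hm.ne' hβ.ne' hs
  rw [hsc] at hric
  have hdamp : dampingRate n m β v s * (c + α / β) < 0 :=
    mul_neg_of_pos_of_neg (hv.dampingRate_pos (by lia) hβ hs) (by linarith)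
  have hreact : c * (m * c + (n - 2)) < 0 := by
    refine mul_neg_of_neg_of_pos hc0 ?_
    rw [← neg_div, div_lt_iff₀ hm] at hnc
    linarith
  exact pos_of_mul_pos_right (by linarith) hs.le

lemma logSlope_mem_uIcc (hv : IsRadialSol n m α β η v) (hn : 3 ≤ n) (hm : 0 < m) (hβ : 0 < β)
    (hmα : m * α < (n - 2) * β) (hr : 0 < r) : logSlope v r ∈ uIcc 0 (-(α / β)) :=
  ⟨hv.le_logSlope hn hm hβ hmα hr, hv.logSlope_le (by lia) hm hβ hr⟩

lemma le_logSlope_dampingRate (hv : IsRadialSol n m α β η v) (hn : 3 ≤ n) (hm : 0 < m)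
    (hβ : 0 < β) (hmα : m * α < (n - 2) * β) (hr : 0 < r) :
    2 + min 0 ((1 - m) * -(α / β)) ≤ logSlope (dampingRate n m β v) r := by
  have hmem := mem_image_of_mem ((1 - m) * ·) (hv.logSlope_mem_uIcc hn hm hβ hmα hr)
  rw [image_const_mul_uIcc, mul_zero] at hmem
  rw [logSlope_dampingRate (by lia) hβ.ne' hr (hv.pos hr.le) (hv.differentiableAt hr)]
  exact add_le_add_right hmem.1 2

lemma dampingRate_one_mul_rpow_le (hv : IsRadialSol n m α β η v) (hn : 3 ≤ n) (hm : 0 < m)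
    (hβ : 0 < β) (hmα : m * α < (n - 2) * β) (hr : 1 ≤ r) :
    dampingRate n m β v 1 * r ^ (2 + min 0 ((1 - m) * -(α / β))) ≤ dampingRate n m β v r := by
  have hpos : ∀ s ∈ Icc 1 r, 0 < s := fun s hs => one_pos.trans_le hs.1
  simpa only [one_rpow, mul_one] using mul_rpow_le_mul_rpow_of_le_logSlope one_pos hr
    (fun s hs => hv.dampingRate_pos (by lia) hβ (hpos s hs))
    (fun s hs => ((differentiableAt_rpow_const_of_ne 2 (hpos s hs).ne').mul
      ((hv.differentiableAt (hpos s hs)).rpow_const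
        (Or.inl (hv.pos (hpos s hs).le).ne'))).const_mul _)
    fun s hs => hv.le_logSlope_dampingRate hn hm hβ hmα (hpos s hs)

lemma exists_abs_logSlope_add_le (hv : IsRadialSol n m α β η v) (hn : 3 ≤ n) (hm : 0 < m)
    (hβ : 0 < β) (hα : (1 - m) * α < 2 * β) (hmα : m * α < (n - 2) * β) :
    ∃ C δ : ℝ, 0 < δ ∧ ∀ r, 1 ≤ r → |logSlope v r + α / β| ≤ C * r ^ (-δ) := by
  have hε : 0 < 2 + min 0 ((1 - m) * -(α / β)) := by
    rw [← neg_lt_iff_pos_add', lt_min_iff, mul_neg, neg_lt_neg_iff, ← mul_div_assoc, div_lt_iff₀ hβ]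
    exact ⟨neg_lt_zero.2 two_pos, hα⟩
  have hreact : ∃ B, ∀ y ∈ uIcc 0 (-(α / β)), |-(y * (m * y + (n - 2)))| ≤ B :=
    isCompact_uIcc.exists_bound_of_continuousOn
      (f := fun y => -(y * (m * y + (n - 2)))) (by fun_prop)
  obtain ⟨B, hB⟩ := hreact
  refine exists_abs_le_mul_rpow_neg_of_abs_mul_deriv_add_mul_le (B := B)
    (hv.dampingRate_pos (by lia) hβ one_pos) hε
    (fun r hr => (hv.differentiableAt_logSlope (one_pos.trans_le hr)).add_const _)
    (fun r hr => hv.dampingRate_one_mul_rpow_le hn hm hβ hmα hr) fun r hr => ?_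
  have hr0 : 0 < r := one_pos.trans_le hr
  rw [deriv_add_const, hv.riccati (by lia) hm.ne' hβ.ne' hr0]
  exact hB _ (hv.logSlope_mem_uIcc hn hm hβ hmα hr0)

end IsRadialSol

lemma parameter_bounds {n : ℕ} (hn : 3 ≤ n) {m α β : ℝ} (hm : 0 < m)
    (hm' : m < ((n : ℝ) - 2) / n) (hαβ : max α 0 < 2 * β / (1 - m)) :
    0 < β ∧ (1 - m) * α < 2 * β ∧ m * α < (n - 2) * β := by
  have hn' : (3 : ℝ) ≤ n := by exact_mod_cast hn
  have hmn : m * n < n - 2 := (lt_div_iff₀ (by linarith)).1 hm'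
  have hm1 : 0 < 1 - m := by nlinarith
  obtain ⟨hα, hβ⟩ := max_lt_iff.1 hαβ
  rw [lt_div_iff₀ hm1] at hα hβ
  refine ⟨by linarith, by linarith, lt_of_mul_lt_mul_right ?_ hm1.le⟩
  calc m * α * (1 - m) = m * (α * (1 - m)) := by ring
    _ < m * (2 * β) := by gcongr
    _ ≤ (n - 2) * β * (1 - m) := by nlinarith

theorem stmt18_general (n : ℕ) (hn : 3 ≤ n) (m α β η : ℝ) (hm : 0 < m) (hβ : 0 < β)
    (hα : (1 - m) * α < 2 * β) (hmα : m * α < (n - 2) * β)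
    (v : ℝ → ℝ) (hv : IsRadialSol n m α β η v) :
    ∃ c C : ℝ, 0 < c ∧ c ≤ C ∧
      ∀ r : ℝ, 1 ≤ r → c ≤ r ^ (α / β) * v r ∧ r ^ (α / β) * v r ≤ C := by
  obtain ⟨C, δ, hδ, hC⟩ := hv.exists_abs_logSlope_add_le hn hm hβ hα hmα
  have hpos : ∀ r : ℝ, 1 ≤ r → 0 < r := fun r hr => one_pos.trans_le hr
  refine exists_bounds_of_abs_logSlope_le (C := C) hδ
    (fun r hr => mul_pos (rpow_pos_of_pos (hpos r hr) _) (hv.pos (hpos r hr).le))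
    (fun r hr => (differentiableAt_rpow_const_of_ne _ (hpos r hr).ne').mul
      (hv.differentiableAt (hpos r hr))) fun r hr => ?_
  rw [logSlope_rpow_mul (hpos r hr) (hv.pos (hpos r hr).le).ne' (hv.differentiableAt (hpos r hr)),
    add_comm]
  exact hC r hr

theorem stmt18 (n : ℕ) (hn : 3 ≤ n) (m α β η : ℝ) (hη : 0 < η)
    (hm : 0 < m) (hm' : m < ((n : ℝ) - 2) / n)
    (hαβ : max α 0 < 2 * β / (1 - m))
    (v : ℝ → ℝ) (hv : IsRadialSol n m α β η v) :
    ∃ c C : ℝ, 0 < c ∧ c ≤ C ∧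
      ∀ r : ℝ, 1 ≤ r → c ≤ r ^ (α / β) * v r ∧ r ^ (α / β) * v r ≤ C := by
  obtain ⟨hβ, hα, hmα⟩ := parameter_bounds hn hm hm' hαβ
  exact stmt18_general n hn m α β η hm hβ hα hmα v hv
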